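/- Define operators on double sequences $(C_m^\sigma)$ indexed by positive integers $m$ and elements $\sigma$ of the class group $\mathrm{Pic}(\mathcal{O}_K)$ of an imaginary quadratic field $K$ with split prime $p = \mathfrak{p}\bar{\mathfrak{p}}$: $U_p(C)_m^\sigma = C_{mp}^\sigma$ and $\sigma_{\mathfrak{p}}(C)_m^\sigma = C_m^{\sigma\sigma_{\mathfrak{p}}}$. Let $\chi$ be an unramified Hecke character of infinity type $(2k,0)$, $0 < 2k < 2r$, and define $C_m^\sigma = m^{r-k-1}\sum_{n=1}^{m|D|/N} r_{\mathcal{A},\chi}(m|D|-nN)\sigma_{\mathcal{A}}(n) H_{r-k-1,k}(1 - \frac{2nN}{m|D|})$ and $B_m^\sigma$ the same sum restricted to $n$ prime to $p$. Then $\prod_{\mathfrak{q} \mid p}(U_p - p^{r-k-1}\chi(\bar{\mathfrak{q}})\sigma_{\mathfrak{q}})^2\, C_m^\sigma = (U_p^4 - p^{2r-2}U_p^2)\, B_m^\sigma$, where the product is over the two primes $\mathfrak{p}, \bar{\mathfrak{p}}$ above $p$. -/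

import Mathlib

/-!
Write `g = [P]`, so that `[P̄] = g⁻¹`, and `a = χ(P)`, `b = χ(P̄)`, `ab = χ((p)) = p^{2k}`. With
`X = b·σ_P + a·σ_P̄` and `c = p^{r-k-1}`, the operator on the left is
`(U_p² - c X U_p + c² ab)²` (expanded in `TOp_expand`), and `c² ab = p^{2r-2}`.

Each of the sequences occurring in the expansion is a sum over indices `n` at some level `m p^j`,
`j ≤ 4`. Replacing `n` by `n p^{4-j}` puts all of them over the index range of `C_{m p⁴}`
(`sum_stretch`, `Cseq_eq`, `Bseq_eq`); this preserves the argument of `H`, and the powers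
`(m p^j)^{r-k-1}` absorb the powers of `c`. It remains to compare the two sides for each `n`
(`pointwise`). Let `n = n₀ p^t` with `p ∤ n₀`, and let `R_j` be the value of `r` at
`(m p⁴|D| - nN) / p^j`. The value of `σ` at `n / p^j` is `t - j + 1` times a factor that depends on
the class only modulo squares, and this factor is the same for all terms. The claim becomes
`(t+1) R₀ - 2t X R₁ + (t-1)(X² + 2ab) R₂ - 2ab (t-2) X R₃ + (ab)² (t-3) R₄ = 0`, with the terms
`j > t` missing and with the right-hand side corrected for `t = 0` and `t = 2`. It follows from the
recurrence `X R_{j+1} = R_j + ab R_{j+2}`. When `t ≤ 3`, the argument of `r` has `p`-adic valuation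
exactly `t` because `p ∤ N`, so that `R_{t+1}` vanishes.

The recurrence itself (`hecke_rec`) is inclusion-exclusion: an ideal of norm divisible by `p` is
divisible by `P` or by `P̄`, and by both exactly when it is divisible by `(p) = P P̄`.
-/

open NumberField Ideal
open scoped nonZeroDivisors

/-- `H_{m,k}(t) = 1/(2^m (m+2k)!) · (d/dt)^{m+2k} [(t²-1)^m (t-1)^{2k}]` (over `ℂ`). -/
noncomputable def Hc (m k : ℕ) (t : ℂ) : ℂ :=
  (1 / (2 ^ m * ((m + 2 * k).factorial : ℂ))) *
    iteratedDeriv (m + 2 * k) (fun s : ℂ => (s ^ 2 - 1) ^ m * (s - 1) ^ (2 * k)) t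

/-- `r_{𝒜,χ}(t) = ∑ χ(𝔞)` over integral ideals `𝔞` in the ideal class `A` of norm `t`. -/
noncomputable def heckeSum {K : Type*} [Field K] [NumberField K]
    (χ : Ideal (𝓞 K) → ℂ) (A : ClassGroup (𝓞 K)) (t : ℕ) : ℂ :=
  ∑ᶠ I ∈ {I : (Ideal (𝓞 K))⁰ |
      Ideal.absNorm (I : Ideal (𝓞 K)) = t ∧ ClassGroup.mk0 I = A},
    χ (I : Ideal (𝓞 K))

/-- The double sequence
`C_m^𝒜 = m^{r-k-1} ∑_{n=1}^{m|D|/N} r_{𝒜,χ}(m|D| - nN) σ_𝒜(n) H_{r-k-1,k}(1 - 2nN/(m|D|))`. -/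
noncomputable def Cseq {K : Type*} [Field K] [NumberField K]
    (χ : Ideal (𝓞 K) → ℂ) (σw : ClassGroup (𝓞 K) → ℕ → ℂ)
    (D : ℤ) (N r k : ℕ) (m : ℕ) (A : ClassGroup (𝓞 K)) : ℂ :=
  (m : ℂ) ^ (r - k - 1) *
    ∑ n ∈ Finset.Icc 1 (m * D.natAbs / N),
      heckeSum χ A (m * D.natAbs - n * N) * σw A n *
        Hc (r - k - 1) k (1 - 2 * (n : ℂ) * (N : ℂ) / ((m : ℂ) * (D.natAbs : ℂ)))

/-- The same sum restricted to `n` prime to `p`. -/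
noncomputable def Bseq {K : Type*} [Field K] [NumberField K]
    (χ : Ideal (𝓞 K) → ℂ) (σw : ClassGroup (𝓞 K) → ℕ → ℂ)
    (D : ℤ) (N r k p : ℕ) (m : ℕ) (A : ClassGroup (𝓞 K)) : ℂ :=
  (m : ℂ) ^ (r - k - 1) *
    ∑ n ∈ Finset.Icc 1 (m * D.natAbs / N),
      if ¬ p ∣ n then
        heckeSum χ A (m * D.natAbs - n * N) * σw A n *
          Hc (r - k - 1) k (1 - 2 * (n : ℂ) * (N : ℂ) / ((m : ℂ) * (D.natAbs : ℂ)))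
      else 0

/-- The operator `U_p - c·σ_𝔮` on double sequences: `(T F)_m^𝒜 = F_{mp}^𝒜 - c·F_m^{𝒜·[𝔮]}`. -/
noncomputable def TOp {K : Type*} [Field K] [NumberField K] (p : ℕ) (c : ℂ)
    (q : ClassGroup (𝓞 K))
    (F : ℕ → ClassGroup (𝓞 K) → ℂ) : ℕ → ClassGroup (𝓞 K) → ℂ :=
  fun m A => F (m * p) A - c * F m (A * q)

/-! ### The recurrence for sums over ideals at a split prime -/

section HeckeRecurrence

variable {K : Type*} [Field K] [NumberField K]

/-- The nonzero ideals of norm `n` in the class `A` that are divisible by `Q`. -/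
def multiplesOf (Q : (Ideal (𝓞 K))⁰) (A : ClassGroup (𝓞 K)) (n : ℕ) : Set (Ideal (𝓞 K))⁰ :=
  {I | (Ideal.absNorm (I : Ideal (𝓞 K)) = n ∧ ClassGroup.mk0 I = A) ∧
    (Q : Ideal (𝓞 K)) ∣ I}

/-- Summing a multiplicative `χ` over the multiples of a fixed ideal `Q` factors out `χ Q` and
shifts the ideal class by `[Q]⁻¹`. -/
lemma sum_multiples (χ : Ideal (𝓞 K) → ℂ)
    (hmul : ∀ I J : Ideal (𝓞 K), χ (I * J) = χ I * χ J)
    (Q : (Ideal (𝓞 K))⁰) (d : ℕ) (hd : 0 < d)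
    (hQ : Ideal.absNorm (Q : Ideal (𝓞 K)) = d) (A : ClassGroup (𝓞 K)) (t : ℕ) :
    ∑ᶠ I ∈ multiplesOf Q A (d * t), χ (I : Ideal (𝓞 K))
      = χ Q * heckeSum χ (A * (ClassGroup.mk0 Q)⁻¹) t := by
  have hset : multiplesOf Q A (d * t)
      = (fun J : (Ideal (𝓞 K))⁰ => Q * J) '' {J : (Ideal (𝓞 K))⁰ |
        Ideal.absNorm (J : Ideal (𝓞 K)) = t ∧
          ClassGroup.mk0 J = A * (ClassGroup.mk0 Q)⁻¹} := by
    ext I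
    simp only [Set.mem_image, multiplesOf, Set.mem_ofPred_eq]
    constructor
    · rintro ⟨⟨h1, h2⟩, J, hJ⟩
      have hJ0 : J ∈ (Ideal (𝓞 K))⁰ := by
        rw [mem_nonZeroDivisors_iff_ne_zero]
        rintro rfl
        exact nonZeroDivisors.coe_ne_zero I (by rw [hJ, mul_zero])
      have hI : I = Q * ⟨J, hJ0⟩ := Subtype.ext hJ
      refine ⟨⟨J, hJ0⟩, ⟨?_, ?_⟩, hI.symm⟩
      · rw [hJ, map_mul, hQ] at h1
        exact Nat.eq_of_mul_eq_mul_left hd h1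
      · rw [← h2, hI, map_mul]; simp
    · rintro ⟨J, ⟨h1, h2⟩, rfl⟩
      refine ⟨⟨?_, ?_⟩, ?_⟩
      · simp [hQ, h1]
      · rw [map_mul, h2]; simp
      · exact ⟨J, rfl⟩
  rw [hset, finsum_mem_image (fun a _ b _ h => mul_left_cancel h)]
  simp only [Submonoid.coe_mul, hmul]
  rw [heckeSum, mul_finsum_mem]

/-- If the rational prime `p` is the product of the prime ideals `P` and `P'`, an ideal of norm
divisible by `p` is divisible by one of them. -/
lemma dvd_of_dvd_absNorm {p : ℕ} (hp : p.Prime) {P P' : Ideal (𝓞 K)}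
    (hP : P.IsPrime) (hP' : P'.IsPrime) (hP0 : P ≠ ⊥) (hP'0 : P' ≠ ⊥)
    (hsplit : P * P' = Ideal.span {(p : 𝓞 K)}) (I : Ideal (𝓞 K))
    (h : p ∣ Ideal.absNorm I) : P ∣ I ∨ P' ∣ I := by
  obtain ⟨M, hM, hMp, hMI⟩ := Ideal.exists_isMaximal_dvd_of_dvd_absNorm
    (p := (p : ℤ)) (Nat.prime_iff_prime_int.mp hp) I (by exact_mod_cast h)
  have hpM : (p : 𝓞 K) ∈ M := by
    have : (p : ℤ) ∈ M.under ℤ := by rw [hMp]; exact Ideal.mem_span_singleton_self _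
    simpa [Ideal.mem_comap] using this
  have hle : P * P' ≤ M := by
    rw [hsplit, Ideal.span_singleton_le_iff_mem]; exact hpM
  rcases hM.isPrime.mul_le.mp hle with h1 | h1
  · left
    rwa [(hP.isMaximal hP0).eq_of_le hM.ne_top h1]
  · right
    rwa [(hP'.isMaximal hP'0).eq_of_le hM.ne_top h1]

/-- The Hecke recurrence `r_A(pt) + χ((p)) r_A(t/p) = χ(P̄) r_{A[P]}(t) + χ(P) r_{A[P̄]}(t)` at the
split prime `p`: inclusion-exclusion on the ideals divisible by `P`, respectively by `P̄`. -/
lemma hecke_rec (χ : Ideal (𝓞 K) → ℂ)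
    (hmul : ∀ I J : Ideal (𝓞 K), χ (I * J) = χ I * χ J)
    {p : ℕ} (hp : p.Prime) (P Pbar : (Ideal (𝓞 K))⁰)
    (hP : Ideal.absNorm (P : Ideal (𝓞 K)) = p)
    (hPbar : Ideal.absNorm (Pbar : Ideal (𝓞 K)) = p)
    (hPprime : (P : Ideal (𝓞 K)).IsPrime) (hPbarprime : (Pbar : Ideal (𝓞 K)).IsPrime)
    (hPne : P ≠ Pbar)
    (hsplit : (P : Ideal (𝓞 K)) * (Pbar : Ideal (𝓞 K)) = Ideal.span {(p : 𝓞 K)})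
    (hcl : ClassGroup.mk0 P * ClassGroup.mk0 Pbar = 1)
    (A : ClassGroup (𝓞 K)) (t : ℕ) :
    heckeSum χ A (p * t) + χ P * χ Pbar * (if p ∣ t then heckeSum χ A (t / p) else 0)
      = χ Pbar * heckeSum χ (A * ClassGroup.mk0 P) t
        + χ P * heckeSum χ (A * ClassGroup.mk0 Pbar) t := by
  have hP0 := nonZeroDivisors.coe_ne_zero P
  have hPbar0 := nonZeroDivisors.coe_ne_zero Pbar
  have e1 := sum_multiples χ hmul P p hp.pos hP A t
  have e2 := sum_multiples χ hmul Pbar p hp.pos hPbar A t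
  rw [inv_eq_of_mul_eq_one_right hcl] at e1
  rw [inv_eq_of_mul_eq_one_left hcl] at e2
  have hfin : {I : (Ideal (𝓞 K))⁰ | Ideal.absNorm (I : Ideal (𝓞 K)) = p * t ∧
      ClassGroup.mk0 I = A}.Finite :=
    ((Ideal.finite_setOfPred_absNorm_eq (S := 𝓞 K) (p * t)).preimage
      Subtype.val_injective.injOn).subset fun I hI => hI.1
  have hunion : {I : (Ideal (𝓞 K))⁰ | Ideal.absNorm (I : Ideal (𝓞 K)) = p * t ∧
        ClassGroup.mk0 I = A}
      = multiplesOf P A (p * t)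
        ∪ multiplesOf Pbar A (p * t) := by
    ext I
    simp only [Set.mem_union, multiplesOf, Set.mem_ofPred_eq, ← and_or_left]
    refine ⟨fun h => ⟨h, ?_⟩, fun h => h.1⟩
    exact dvd_of_dvd_absNorm hp hPprime hPbarprime hP0 hPbar0 hsplit _ (h.1 ▸ dvd_mul_right _ _)
  have hinter : multiplesOf P A (p * t)
        ∩ multiplesOf Pbar A (p * t)
      = multiplesOf (P * Pbar) A (p * t) := by
    ext I
    simp only [Set.mem_inter_iff, multiplesOf, Set.mem_ofPred_eq, Submonoid.coe_mul]
    constructor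
    · rintro ⟨⟨h1, h2⟩, -, h3⟩
      have hcop : IsCoprime (P : Ideal (𝓞 K)) (Pbar : Ideal (𝓞 K)) :=
        by
        have := hPprime.isMaximal hP0
        have := hPbarprime.isMaximal hPbar0
        exact Ideal.isCoprime_of_isMaximal fun h => hPne (Subtype.ext h)
      exact ⟨h1, hcop.mul_dvd h2 h3⟩
    · rintro ⟨h1, h2⟩
      exact ⟨⟨h1, (dvd_mul_right _ _).trans h2⟩, h1, (dvd_mul_left _ _).trans h2⟩
  have hN : Ideal.absNorm ((P * Pbar : (Ideal (𝓞 K))⁰) : Ideal (𝓞 K)) = p * p := by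
    rw [Submonoid.coe_mul, map_mul, hP, hPbar]
  have e3 : ∑ᶠ I ∈ multiplesOf (P * Pbar) A (p * t),
          χ (I : Ideal (𝓞 K))
      = χ P * χ Pbar * (if p ∣ t then heckeSum χ A (t / p) else 0) := by
    split_ifs with hpt
    · obtain ⟨s, rfl⟩ := hpt
      have := sum_multiples χ hmul (P * Pbar) (p * p) (by have := hp.pos; positivity) hN A s
      rw [map_mul, hcl, inv_one, mul_one, Submonoid.coe_mul, hmul] at this
      rw [Nat.mul_div_cancel_left _ hp.pos, ← this, mul_assoc p p s]
    · rw [mul_zero]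
      suffices h : multiplesOf (P * Pbar) A (p * t) = ∅ by rw [h, finsum_mem_empty]
      rw [Set.eq_empty_iff_forall_notMem]
      rintro I ⟨⟨h1, -⟩, h2⟩
      have := map_dvd Ideal.absNorm h2
      rw [hN, h1] at this
      exact hpt (Nat.dvd_of_mul_dvd_mul_left hp.pos this)
  have key := finsum_mem_union_inter (f := fun I : (Ideal (𝓞 K))⁰ => χ (I : Ideal (𝓞 K)))
    (s := multiplesOf P A (p * t)) (t := multiplesOf Pbar A (p * t))
    (hfin.subset fun I hI => hI.1) (hfin.subset fun I hI => hI.1)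
  rw [hinter, ← hunion, e1, e2, e3] at key
  rw [heckeSum, key]
  ring

end HeckeRecurrence

/-! ### Rescaling the sums, and the identity for a single index -/

section Combinatorics

/-- A sum over `1 ≤ n ≤ X / N`, rewritten over the multiples `n = d n'` in `1 ≤ n ≤ X d / N`. -/
lemma sum_stretch (f : ℕ → ℂ) (X N d : ℕ) (hN : 0 < N) (hd : 0 < d) :
    ∑ n ∈ Finset.Icc 1 (X / N), f n
      = ∑ n ∈ Finset.Icc 1 (X * d / N), if d ∣ n then f (n / d) else 0 := by
  rw [← Finset.sum_filter]
  refine Finset.sum_bij' (fun n _ => n * d) (fun n _ => n / d) ?_ ?_ ?_ ?_ ?_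
  · intro n hn
    rw [Finset.mem_Icc, Nat.le_div_iff_mul_le hN] at hn
    rw [Finset.mem_filter, Finset.mem_Icc, Nat.le_div_iff_mul_le hN]
    refine ⟨⟨Nat.mul_pos hn.1 hd, ?_⟩, dvd_mul_left _ _⟩
    calc n * d * N = n * N * d := by ring
      _ ≤ X * d := Nat.mul_le_mul_right _ hn.2
  · intro n hn
    rw [Finset.mem_filter, Finset.mem_Icc, Nat.le_div_iff_mul_le hN] at hn
    obtain ⟨⟨h1, h2⟩, n, rfl⟩ := hn
    rw [Finset.mem_Icc, Nat.le_div_iff_mul_le hN, Nat.mul_div_cancel_left _ hd]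
    refine ⟨Nat.pos_of_mul_pos_left h1, Nat.le_of_mul_le_mul_right ?_ hd⟩
    calc n * N * d = d * n * N := by ring
      _ ≤ X * d := h2
  · intro n _
    exact Nat.mul_div_cancel _ hd
  · intro n hn
    exact Nat.div_mul_cancel (Finset.mem_filter.mp hn).2
  · intro n _
    rw [Nat.mul_div_cancel _ hd]

variable {G : Type*}

/-- The summand of index `n` in the sums defining `C_m` and `B_m`, with the weights `R`, `σ` and
`H` left abstract and `d` standing for `|D|`. -/
noncomputable def wt (R σ : G → ℕ → ℂ) (H : ℂ → ℂ) (d N m : ℕ) (A : G) (n : ℕ) : ℂ :=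
  R A (m * d - n * N) * σ A n * H (1 - 2 * (n : ℂ) * (N : ℂ) / ((m : ℂ) * (d : ℂ)))

/-- `wt` at `n / q` if `q ∣ n`, and zero otherwise. -/
noncomputable def wtDiv (R σ : G → ℕ → ℂ) (H : ℂ → ℂ) (d N m q : ℕ) (A : G) (n : ℕ) : ℂ :=
  if q ∣ n then wt R σ H d N m A (n / q) else 0

/-- Scaling `m` and `n` by the same power of `p` leaves the argument of `H` unchanged. -/
lemma wt_scale (R σ : G → ℕ → ℂ) (H : ℂ → ℂ) (d N m p i : ℕ) (hp : p ≠ 0) (A : G) (n : ℕ) :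
    wt R σ H d N (m * p ^ i) A (n * p ^ i)
      = R A (p ^ i * (m * d - n * N)) * σ A (n * p ^ i) *
        H (1 - 2 * (n : ℂ) * (N : ℂ) / ((m : ℂ) * (d : ℂ))) := by
  have hpi : (p : ℂ) ^ i ≠ 0 := pow_ne_zero _ (Nat.cast_ne_zero.mpr hp)
  have h1 : m * p ^ i * d - n * p ^ i * N = p ^ i * (m * d - n * N) := by
    rw [Nat.mul_sub]; congr 1 <;> ring
  have h2 : 2 * ((n * p ^ i : ℕ) : ℂ) * (N : ℂ) / (((m * p ^ i : ℕ) : ℂ) * (d : ℂ))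
      = 2 * (n : ℂ) * (N : ℂ) / ((m : ℂ) * (d : ℂ)) := by
    push_cast
    rw [← mul_div_mul_right (2 * (n : ℂ) * N) _ hpi]
    congr 1 <;> ring
  rw [wt, h1, h2]

lemma wtDiv_of_mul (R σ : G → ℕ → ℂ) (H : ℂ → ℂ) (d N m p i j : ℕ) (hp : p ≠ 0) (A : G)
    (n : ℕ) :
    wtDiv R σ H d N (m * p ^ j) (p ^ i) A (n * p ^ (j + i))
      = R A (p ^ j * (m * d - n * N)) * σ A (n * p ^ j) *
        H (1 - 2 * (n : ℂ) * (N : ℂ) / ((m : ℂ) * (d : ℂ))) := by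
  have h : n * p ^ (j + i) = n * p ^ j * p ^ i := by rw [pow_add, mul_assoc]
  rw [wtDiv, h, if_pos (dvd_mul_left _ _),
    Nat.mul_div_cancel _ (pow_pos (Nat.pos_of_ne_zero hp) i), wt_scale _ _ _ _ _ _ _ _ hp]

lemma not_pow_dvd {p : ℕ} (hp : p.Prime) {n : ℕ} (hn : ¬ p ∣ n) {t i : ℕ} (h : t < i) :
    ¬ p ^ i ∣ n * p ^ t := by
  intro hd
  have h1 : p ^ (t + 1) ∣ n * p ^ t := (pow_dvd_pow p h).trans hd
  rw [pow_succ, mul_comm n] at h1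
  exact hn (Nat.dvd_of_mul_dvd_mul_left (pow_pos hp.pos t) h1)

lemma wtDiv_eq_zero (R σ : G → ℕ → ℂ) (H : ℂ → ℂ) (d N m : ℕ) {p : ℕ} (hp : p.Prime)
    (A : G) {n : ℕ} (hn : ¬ p ∣ n) {t i : ℕ} (h : t < i) :
    wtDiv R σ H d N m (p ^ i) A (n * p ^ t) = 0 :=
  if_neg (not_pow_dvd hp hn h)

/-- The operator identity for a single index `n`, all terms being indexed as in `C_{m p⁴}`.
After the weights `σ` are reduced to a common factor, with multiplicities `t + 1, t, t - 1, …`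
for `t = v_p(n)`, it is a linear consequence of the recurrence for `R`. -/
lemma pointwise [CommGroup G] {p : ℕ} (hp : p.Prime) (R σ : G → ℕ → ℂ) (H : ℂ → ℂ) (a b : ℂ) (g g' : G)
    (hg : g * g' = 1)
    (hR : ∀ A t, R A (p * t) + a * b * (if p ∣ t then R A (t / p) else 0)
      = b * R (A * g) t + a * R (A * g') t)
    (hσ : ∀ (A : G) (n t : ℕ), ¬ p ∣ n → σ A (n * p ^ t) = ((t : ℂ) + 1) * σ (A * g ^ t) n)
    (hσ₂ : ∀ A B, σ (A * B ^ 2) = σ A)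
    (d N m : ℕ) (hpN : ¬ p ∣ N) (A : G) (n : ℕ) (hn : 0 < n)
    (hle : n * N ≤ m * p ^ 4 * d) :
    wtDiv R σ H d N (m * p ^ 4) (p ^ 0) A n
      - 2 * (b * wtDiv R σ H d N (m * p ^ 3) (p ^ 1) (A * g) n
        + a * wtDiv R σ H d N (m * p ^ 3) (p ^ 1) (A * g') n)
      + (b ^ 2 * wtDiv R σ H d N (m * p ^ 2) (p ^ 2) (A * g * g) n
        + a ^ 2 * wtDiv R σ H d N (m * p ^ 2) (p ^ 2) (A * g' * g') n
        + 4 * (a * b) * wtDiv R σ H d N (m * p ^ 2) (p ^ 2) A n)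
      - 2 * (a * b) * (b * wtDiv R σ H d N (m * p ^ 1) (p ^ 3) (A * g) n
        + a * wtDiv R σ H d N (m * p ^ 1) (p ^ 3) (A * g') n)
      + (a * b) ^ 2 * wtDiv R σ H d N (m * p ^ 0) (p ^ 4) A n
    = (if ¬ p ∣ n then wtDiv R σ H d N (m * p ^ 4) (p ^ 0) A n else 0)
      - a * b * (if ¬ p ^ 3 ∣ n then wtDiv R σ H d N (m * p ^ 2) (p ^ 2) A n else 0) := by
  have hp0 : p ≠ 0 := hp.ne_zero
  obtain rfl : g' = g⁻¹ := (inv_eq_of_mul_eq_one_right hg).symm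
  have hcong : ∀ X Y B : G, X = Y * B ^ 2 → σ X = σ Y := by
    rintro X Y B rfl; exact hσ₂ Y B
  -- `p` does not divide the argument of `R` once `n` has been made prime to `p`
  have hY : ∀ x y : ℕ, ¬ p ∣ y → y * N ≤ x * p * d → ¬ p ∣ x * p * d - y * N := by
    intro x y hy hxy h
    have h1 : p ∣ x * p * d := ⟨x * d, by ring⟩
    have h2 : p ∣ y * N := by
      have := Nat.dvd_sub h1 h
      rwa [Nat.sub_sub_self hxy] at this
    exact (hp.dvd_mul.mp h2).elim hy hpN
  have hR0 : ∀ A t, ¬ p ∣ t → R A (p * t) = b * R (A * g) t + a * R (A * g⁻¹) t := by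
    intro A t ht
    have := hR A t
    rwa [if_neg ht, mul_zero, add_zero] at this
  have hR1 : ∀ A t, R A (p * (p * t)) + a * b * R A t
      = b * R (A * g) (p * t) + a * R (A * g⁻¹) (p * t) := by
    intro A t
    have := hR A (p * t)
    rwa [if_pos (dvd_mul_right _ _), Nat.mul_div_cancel_left _ hp.pos] at this
  obtain ⟨t, n₀, hn₀, rfl⟩ := Nat.exists_eq_pow_mul_and_not_dvd hn.ne' p hp.ne_one
  rw [mul_comm (p ^ t) n₀] at hle ⊢
  -- every term, reduced to the value of `σ` at `n₀`; here `s = max (t - 4) 0`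
  have ev : ∀ (k i j c s t : ℕ), k = c + j → t = s + j + i → ∀ A : G,
      wtDiv R σ H d N (m * p ^ k) (p ^ i) A (n₀ * p ^ t)
        = R A (p ^ j * (m * p ^ c * d - n₀ * p ^ s * N)) *
          ((((s + j : ℕ) : ℂ) + 1) * σ (A * g ^ (s + j)) n₀) *
          H (1 - 2 * ((n₀ * p ^ s : ℕ) : ℂ) * (N : ℂ) / (((m * p ^ c : ℕ) : ℂ) * (d : ℂ))) := by
    rintro k i j c s t rfl rfl A
    rw [← hσ A n₀ (s + j) hn₀, pow_add p s j, ← mul_assoc n₀,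
      ← wtDiv_of_mul R σ H d N (m * p ^ c) p i j hp0]
    congr 1
    · ring
    · ring
  obtain rfl | rfl | rfl | rfl | ⟨s, rfl⟩ :
      t = 0 ∨ t = 1 ∨ t = 2 ∨ t = 3 ∨ ∃ s, t = s + 4 := by
    rcases t with _ | _ | _ | _ | s
    · simp
    · simp
    · simp
    · simp
    · exact Or.inr (Or.inr (Or.inr (Or.inr ⟨s, rfl⟩)))
  -- `p ∤ n`: only the leading term survives on either side
  · have hz : ∀ m i A, 0 < i → wtDiv R σ H d N m (p ^ i) A (n₀ * p ^ 0) = 0 :=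
      fun m i A hi => wtDiv_eq_zero R σ H d N m hp A hn₀ hi
    rw [hz _ 1 _ (by norm_num), hz _ 1 _ (by norm_num), hz _ 2 _ (by norm_num),
      hz _ 2 _ (by norm_num), hz _ 2 _ (by norm_num), hz _ 3 _ (by norm_num),
      hz _ 3 _ (by norm_num), hz _ 4 _ (by norm_num), if_pos (by simpa using hn₀)]
    simp
  · have hz : ∀ m i A, 1 < i → wtDiv R σ H d N m (p ^ i) A (n₀ * p ^ 1) = 0 :=
      fun m i A hi => wtDiv_eq_zero R σ H d N m hp A hn₀ hi
    rw [hz _ 2 _ (by norm_num), hz _ 2 _ (by norm_num), hz _ 2 _ (by norm_num),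
      hz _ 3 _ (by norm_num), hz _ 3 _ (by norm_num), hz _ 4 _ (by norm_num),
      if_neg (not_not.mpr (by simp)), ite_self,
      ev 4 0 1 3 0 1 rfl rfl A, ev 3 1 0 3 0 1 rfl rfl (A * g), ev 3 1 0 3 0 1 rfl rfl (A * g⁻¹),
      hcong (A * g * g ^ (0 + 0)) (A * g) 1 (by simp),
      hcong (A * g⁻¹ * g ^ (0 + 0)) (A * g) g⁻¹ (by group),
      hcong (A * g ^ (0 + 1)) (A * g) 1 (by simp)]
    have hYn := hY (m * p ^ 2) (n₀ * p ^ 0) (by simpa using hn₀)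
      (Nat.le_of_mul_le_mul_right (c := p) (by ring_nf at hle ⊢; exact hle) hp.pos)
    rw [show m * p ^ 2 * p = m * p ^ 3 by ring] at hYn
    generalize m * p ^ 3 * d - n₀ * p ^ 0 * N = Y at hYn ⊢
    have r1 := hR0 A Y hYn
    simp only [pow_one, pow_zero, one_mul, Nat.cast_zero, Nat.cast_one, zero_add, add_zero,
      r1]
    ring
  -- `v_p(n) = 2`: the remaining multiple of `R₂` is the second term on the right
  · have hz : ∀ m i A, 2 < i → wtDiv R σ H d N m (p ^ i) A (n₀ * p ^ 2) = 0 :=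
      fun m i A hi => wtDiv_eq_zero R σ H d N m hp A hn₀ hi
    rw [hz _ 3 _ (by norm_num), hz _ 3 _ (by norm_num), hz _ 4 _ (by norm_num),
      if_neg (not_not.mpr (Dvd.intro_left (n₀ * p) (by ring))),
      if_pos (not_pow_dvd hp hn₀ (by norm_num)),
      ev 4 0 2 2 0 2 rfl rfl A, ev 3 1 1 2 0 2 rfl rfl (A * g), ev 3 1 1 2 0 2 rfl rfl (A * g⁻¹),
      ev 2 2 0 2 0 2 rfl rfl A, ev 2 2 0 2 0 2 rfl rfl (A * g * g),
      ev 2 2 0 2 0 2 rfl rfl (A * g⁻¹ * g⁻¹),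
      hcong (A * g ^ (0 + 2)) A g (by simp),
      hcong (A * g * g ^ (0 + 1)) A g (by group),
      hcong (A * g⁻¹ * g ^ (0 + 1)) A 1 (by group),
      hcong (A * g ^ (0 + 0)) A 1 (by group),
      hcong (A * g * g * g ^ (0 + 0)) A g (by group),
      hcong (A * g⁻¹ * g⁻¹ * g ^ (0 + 0)) A g⁻¹ (by group)]
    have hYn := hY (m * p) (n₀ * p ^ 0) (by simpa using hn₀)
      (Nat.le_of_mul_le_mul_right (c := p ^ 2) (by ring_nf at hle ⊢; exact hle)
        (pow_pos hp.pos 2))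
    rw [show m * p * p = m * p ^ 2 by ring] at hYn
    generalize m * p ^ 2 * d - n₀ * p ^ 0 * N = Y at hYn ⊢
    have r1 := hR1 A Y
    have r2 := hR0 (A * g) Y hYn
    have r3 := hR0 (A * g⁻¹) Y hYn
    rw [show A * g * g⁻¹ = A by group] at r2
    rw [show A * g⁻¹ * g = A by group] at r3
    simp only [pow_one, pow_zero, one_mul, Nat.cast_zero, Nat.cast_one, zero_add, add_zero,
      pow_two p, mul_assoc p p Y]
    generalize H _ = h
    push_cast
    linear_combination (3 * σ A n₀ * h) * r1 - (b * σ A n₀ * h) * r2 - (a * σ A n₀ * h) * r3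
  -- `v_p(n) = 3`: the multiplicity `t - 3` of the missing term is zero, so all cancels as for
  -- larger valuations
  · have hz : ∀ m i A, 3 < i → wtDiv R σ H d N m (p ^ i) A (n₀ * p ^ 3) = 0 :=
      fun m i A hi => wtDiv_eq_zero R σ H d N m hp A hn₀ hi
    rw [hz _ 4 _ (by norm_num),
      if_neg (not_not.mpr (Dvd.intro_left (n₀ * p ^ 2) (by ring))),
      if_neg (not_not.mpr (dvd_mul_left _ _)),
      ev 4 0 3 1 0 3 rfl rfl A, ev 3 1 2 1 0 3 rfl rfl (A * g), ev 3 1 2 1 0 3 rfl rfl (A * g⁻¹),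
      ev 2 2 1 1 0 3 rfl rfl A, ev 2 2 1 1 0 3 rfl rfl (A * g * g),
      ev 2 2 1 1 0 3 rfl rfl (A * g⁻¹ * g⁻¹),
      ev 1 3 0 1 0 3 rfl rfl (A * g), ev 1 3 0 1 0 3 rfl rfl (A * g⁻¹),
      hcong (A * g ^ (0 + 3)) (A * g) g (by group),
      hcong (A * g * g ^ (0 + 2)) (A * g) g (by group),
      hcong (A * g⁻¹ * g ^ (0 + 2)) (A * g) 1 (by group),
      hcong (A * g ^ (0 + 1)) (A * g) 1 (by group),
      hcong (A * g * g * g ^ (0 + 1)) (A * g) g (by group),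
      hcong (A * g⁻¹ * g⁻¹ * g ^ (0 + 1)) (A * g) g⁻¹ (by group),
      hcong (A * g * g ^ (0 + 0)) (A * g) 1 (by group),
      hcong (A * g⁻¹ * g ^ (0 + 0)) (A * g) g⁻¹ (by group)]
    generalize m * p ^ 1 * d - n₀ * p ^ 0 * N = Y
    have r1 := hR1 A (p * Y)
    have r2 := hR1 (A * g) Y
    have r3 := hR1 (A * g⁻¹) Y
    rw [show A * g * g⁻¹ = A by group] at r2
    rw [show A * g⁻¹ * g = A by group] at r3
    simp only [pow_one, pow_zero, one_mul, zero_add,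
      pow_succ p 2, pow_two p, mul_assoc p p Y, mul_assoc p p, mul_assoc p (p * p) Y]
    generalize H _ = h
    push_cast
    linear_combination (4 * σ (A * g) n₀ * h) * r1 - (2 * b * σ (A * g) n₀ * h) * r2
      - (2 * a * σ (A * g) n₀ * h) * r3
  -- `v_p(n) ≥ 4`: all terms are present and cancel
  · rw [if_neg (not_not.mpr (Dvd.intro_left (n₀ * p ^ (s + 3)) (by ring))),
      if_neg (not_not.mpr (Dvd.intro_left (n₀ * p ^ (s + 1)) (by ring))),
      ev 4 0 4 0 s (s + 4) rfl rfl A,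
      ev 3 1 3 0 s (s + 4) rfl rfl (A * g), ev 3 1 3 0 s (s + 4) rfl rfl (A * g⁻¹),
      ev 2 2 2 0 s (s + 4) rfl rfl A, ev 2 2 2 0 s (s + 4) rfl rfl (A * g * g),
      ev 2 2 2 0 s (s + 4) rfl rfl (A * g⁻¹ * g⁻¹),
      ev 1 3 1 0 s (s + 4) rfl rfl (A * g), ev 1 3 1 0 s (s + 4) rfl rfl (A * g⁻¹),
      ev 0 4 0 0 s (s + 4) rfl rfl A,
      hcong (A * g ^ (s + 4)) (A * g ^ s) (g ^ 2) (by group),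
      hcong (A * g * g ^ (s + 3)) (A * g ^ s) (g ^ 2) (by group),
      hcong (A * g⁻¹ * g ^ (s + 3)) (A * g ^ s) g (by group),
      hcong (A * g ^ (s + 2)) (A * g ^ s) g (by group),
      hcong (A * g * g * g ^ (s + 2)) (A * g ^ s) (g ^ 2) (by group),
      hcong (A * g⁻¹ * g⁻¹ * g ^ (s + 2)) (A * g ^ s) 1 (by group),
      hcong (A * g * g ^ (s + 1)) (A * g ^ s) g (by group),
      hcong (A * g⁻¹ * g ^ (s + 1)) (A * g ^ s) 1 (by group), add_zero s]
    generalize m * p ^ 0 * d - n₀ * p ^ s * N = Y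
    have r1 := hR1 A (p * (p * Y))
    have r2 := hR1 (A * g) (p * Y)
    have r3 := hR1 (A * g⁻¹) (p * Y)
    have r4 := hR1 A Y
    rw [show A * g * g⁻¹ = A by group] at r2
    rw [show A * g⁻¹ * g = A by group] at r3
    rw [show p ^ 4 * Y = p * (p * (p * (p * Y))) by ring,
      show p ^ 3 * Y = p * (p * (p * Y)) by ring, show p ^ 2 * Y = p * (p * Y) by ring,
      show p ^ 1 * Y = p * Y by ring, show p ^ 0 * Y = Y by ring]
    generalize H _ = h
    push_cast
    linear_combination (σ (A * g ^ s) n₀ * h) * ((s + 5) * r1 - (s + 3) * (b * r2 + a * r3)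
      + (s + 1) * (a * b) * r4)

end Combinatorics

/-! ### The operators and the sequences `C` and `B` -/

section Operators

variable {K : Type*} [Field K] [NumberField K]

/-- The expansion of the fourfold operator, with `X = χ(P̄) σ_P + χ(P) σ_P̄` multiplied out. -/
lemma TOp_expand (p : ℕ) (c a b : ℂ) (g g' : ClassGroup (𝓞 K)) (hg : g * g' = 1)
    (F : ℕ → ClassGroup (𝓞 K) → ℂ) (m : ℕ) (A : ClassGroup (𝓞 K)) :
    TOp p (c * b) g (TOp p (c * b) g (TOp p (c * a) g' (TOp p (c * a) g' F))) m A
      = F (m * p ^ 4) A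
        - 2 * c * (b * F (m * p ^ 3) (A * g) + a * F (m * p ^ 3) (A * g'))
        + c ^ 2 * (b ^ 2 * F (m * p ^ 2) (A * g * g) + a ^ 2 * F (m * p ^ 2) (A * g' * g')
          + 4 * (a * b) * F (m * p ^ 2) A)
        - 2 * c ^ 3 * (a * b) * (b * F (m * p ^ 1) (A * g) + a * F (m * p ^ 1) (A * g'))
        + c ^ 4 * (a * b) ^ 2 * F (m * p ^ 0) A := by
  obtain rfl : g' = g⁻¹ := (inv_eq_of_mul_eq_one_right hg).symm
  simp only [TOp, mul_inv_cancel_right]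
  rw [show m * p * p * p * p = m * p ^ 4 by ring, show m * p * p * p = m * p ^ 3 by ring,
    show m * p * p = m * p ^ 2 by ring, show m * p ^ 1 = m * p by ring,
    show m * p ^ 0 = m by ring]
  ring

/-- `C_{m p^j}` as a sum over the index range of `C_{m p⁴}`, where `i + j = 4`. -/
lemma Cseq_eq (χ : Ideal (𝓞 K) → ℂ) (σw : ClassGroup (𝓞 K) → ℕ → ℂ)
    (D : ℤ) (N r k m p j i : ℕ) (hN : 0 < N) (hp : 0 < p) (hij : j + i = 4)
    (A : ClassGroup (𝓞 K)) :
    Cseq χ σw D N r k (m * p ^ j) A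
      = (m : ℂ) ^ (r - k - 1) * ((p : ℂ) ^ (r - k - 1)) ^ j *
        ∑ n ∈ Finset.Icc 1 (m * p ^ 4 * D.natAbs / N),
          wtDiv (heckeSum χ) σw (Hc (r - k - 1) k) D.natAbs N (m * p ^ j) (p ^ i) A n := by
  have h := sum_stretch (wt (heckeSum χ) σw (Hc (r - k - 1) k) D.natAbs N (m * p ^ j) A)
    (m * p ^ j * D.natAbs) N (p ^ i) hN (pow_pos hp i)
  rw [show m * p ^ j * D.natAbs * p ^ i = m * p ^ 4 * D.natAbs by rw [← hij, pow_add]; ring] at h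
  simp only [wtDiv]
  rw [← h, Cseq]
  simp only [wt]
  push_cast
  ring

/-- `B_{m p^j}` as a sum over the index range of `C_{m p⁴}`, where `i + j = 4`. -/
lemma Bseq_eq (χ : Ideal (𝓞 K) → ℂ) (σw : ClassGroup (𝓞 K) → ℕ → ℂ)
    (D : ℤ) (N r k m p j i : ℕ) (hN : 0 < N) (hp : 0 < p) (hij : j + i = 4)
    (A : ClassGroup (𝓞 K)) :
    Bseq χ σw D N r k p (m * p ^ j) A
      = (m : ℂ) ^ (r - k - 1) * ((p : ℂ) ^ (r - k - 1)) ^ j *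
        ∑ n ∈ Finset.Icc 1 (m * p ^ 4 * D.natAbs / N),
          if ¬ p ^ (i + 1) ∣ n then
            wtDiv (heckeSum χ) σw (Hc (r - k - 1) k) D.natAbs N (m * p ^ j) (p ^ i) A n
          else 0 := by
  have h := sum_stretch (fun n => if ¬ p ∣ n then
      wt (heckeSum χ) σw (Hc (r - k - 1) k) D.natAbs N (m * p ^ j) A n else 0)
    (m * p ^ j * D.natAbs) N (p ^ i) hN (pow_pos hp i)
  rw [show m * p ^ j * D.natAbs * p ^ i = m * p ^ 4 * D.natAbs by rw [← hij, pow_add]; ring] at h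
  have h2 : ∀ n, (if p ^ i ∣ n then (if ¬ p ∣ n / p ^ i then
        wt (heckeSum χ) σw (Hc (r - k - 1) k) D.natAbs N (m * p ^ j) A (n / p ^ i) else 0) else 0)
      = if ¬ p ^ (i + 1) ∣ n then
          wtDiv (heckeSum χ) σw (Hc (r - k - 1) k) D.natAbs N (m * p ^ j) (p ^ i) A n
        else 0 := by
    intro n
    by_cases hn : p ^ i ∣ n
    · obtain ⟨n, rfl⟩ := hn
      have : p ^ (i + 1) ∣ p ^ i * n ↔ p ∣ n := by
        rw [pow_succ, Nat.mul_dvd_mul_iff_left (pow_pos hp i)]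
      simp only [wtDiv, dvd_mul_right, if_true, Nat.mul_div_cancel_left _ (pow_pos hp i), this]
    · simp only [wtDiv, hn, if_false, ite_self]
  rw [← Finset.sum_congr rfl fun n _ => h2 n, ← h, Bseq]
  simp only [wt]
  push_cast
  ring

end Operators
/-- `∏_{𝔮 | p} (U_p - p^{r-k-1} χ(𝔮̄) σ_𝔮)² C_m^σ = (U_p⁴ - p^{2r-2} U_p²) B_m^σ`. -/
theorem stmt19 (K : Type*) [Field K] [NumberField K]
    (h2 : Module.finrank ℚ K = 2)
    (himag : ∀ w : NumberField.InfinitePlace K, w.IsComplex)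
    (D : ℤ) (hdisc : NumberField.discr K = D) (hD : D < 0)
    (N : ℕ) (hN : 0 < N)
    (p : ℕ) (hp : p.Prime) (hpN : ¬ p ∣ N) (hpodd : p ≠ 2)
    (ι : K →+* ℂ) (r k : ℕ) (hk : 0 < k) (hkr : k < r)
    (χ : Ideal (𝓞 K) → ℂ)
    (hmul : ∀ I J : Ideal (𝓞 K), χ (I * J) = χ I * χ J)
    (hprin : ∀ γ : 𝓞 K, γ ≠ 0 →
      χ (Ideal.span {γ}) = (ι (algebraMap (𝓞 K) K γ)) ^ (2 * k))
    (P Pbar : (Ideal (𝓞 K))⁰)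
    (hP : Ideal.absNorm (P : Ideal (𝓞 K)) = p)
    (hPbar : Ideal.absNorm (Pbar : Ideal (𝓞 K)) = p)
    (hPprime : (P : Ideal (𝓞 K)).IsPrime) (hPbarprime : (Pbar : Ideal (𝓞 K)).IsPrime)
    (hPne : P ≠ Pbar)
    (hsplit : (P : Ideal (𝓞 K)) * (Pbar : Ideal (𝓞 K)) = Ideal.span {(p : 𝓞 K)})
    (σw : ClassGroup (𝓞 K) → ℕ → ℂ)
    (hσ₁ : ∀ (A : ClassGroup (𝓞 K)) (n₀ t : ℕ), ¬ p ∣ n₀ →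
      σw A (n₀ * p ^ t) = ((t : ℂ) + 1) * σw (A * (ClassGroup.mk0 P) ^ t) n₀)
    (hσ₁' : ∀ (A : ClassGroup (𝓞 K)) (n₀ t : ℕ), ¬ p ∣ n₀ →
      σw (A * (ClassGroup.mk0 P) ^ t) n₀ = σw (A * (ClassGroup.mk0 Pbar) ^ t) n₀)
    (hσ₂ : ∀ (A B : ClassGroup (𝓞 K)), σw (A * B ^ 2) = σw A)
    (m : ℕ) (hm : 0 < m) (A : ClassGroup (𝓞 K)) :
    (TOp p ((p : ℂ) ^ (r - k - 1) * χ (Pbar : Ideal (𝓞 K))) (ClassGroup.mk0 P)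
      (TOp p ((p : ℂ) ^ (r - k - 1) * χ (Pbar : Ideal (𝓞 K))) (ClassGroup.mk0 P)
        (TOp p ((p : ℂ) ^ (r - k - 1) * χ (P : Ideal (𝓞 K))) (ClassGroup.mk0 Pbar)
          (TOp p ((p : ℂ) ^ (r - k - 1) * χ (P : Ideal (𝓞 K))) (ClassGroup.mk0 Pbar)
            (Cseq χ σw D N r k))))) m A
      = Bseq χ σw D N r k p (m * p ^ 4) A
        - (p : ℂ) ^ (2 * r - 2) * Bseq χ σw D N r k p (m * p ^ 2) A := by
  have hp0 : (p : 𝓞 K) ≠ 0 := Nat.cast_ne_zero.mpr hp.ne_zero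
  have hg : ClassGroup.mk0 P * ClassGroup.mk0 Pbar = 1 := by
    rw [← map_mul]
    refine (ClassGroup.mk0_eq_one_iff (P * Pbar).2).mpr ?_
    exact ⟨⟨(p : 𝓞 K), hsplit⟩⟩
  have hq : χ P * χ Pbar = (p : ℂ) ^ (2 * k) := by
    rw [← hmul, hsplit, hprin _ hp0]
    simp
  have hR := hecke_rec χ hmul hp P Pbar hP hPbar hPprime hPbarprime hPne hsplit hg
  rw [TOp_expand p _ (χ P) (χ Pbar) _ _ hg]
  simp only [Cseq_eq χ σw D N r k m p 4 0 hN hp.pos rfl, Cseq_eq χ σw D N r k m p 3 1 hN hp.pos rfl,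
    Cseq_eq χ σw D N r k m p 2 2 hN hp.pos rfl, Cseq_eq χ σw D N r k m p 1 3 hN hp.pos rfl,
    Cseq_eq χ σw D N r k m p 0 4 hN hp.pos rfl, Bseq_eq χ σw D N r k m p 4 0 hN hp.pos rfl,
    Bseq_eq χ σw D N r k m p 2 2 hN hp.pos rfl]
  have key := Finset.sum_congr (rfl : Finset.Icc 1 (m * p ^ 4 * D.natAbs / N) = _) fun n hn =>
    pointwise hp (heckeSum χ) σw (Hc (r - k - 1) k) (χ P) (χ Pbar) _ _ hg hR hσ₁ hσ₂
      D.natAbs N m hpN A n (Finset.mem_Icc.mp hn).1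
      ((Nat.le_div_iff_mul_le hN).mp (Finset.mem_Icc.mp hn).2)
  simp only [Finset.sum_add_distrib, Finset.sum_sub_distrib, ← Finset.mul_sum] at key
  -- `2 (r - k - 1) + 2 k = 2 r - 2`, the truncated subtraction being harmless as `k < r`
  have hc : (p : ℂ) ^ (2 * r - 2) = ((p : ℂ) ^ (r - k - 1)) ^ 2 * (χ P * χ Pbar) := by
    rw [hq, ← pow_mul, ← pow_add]
    congr 1
    omega
  rw [hc]
  simp only [zero_add, pow_one] at key ⊢
  linear_combination ((m : ℂ) ^ (r - k - 1) * ((p : ℂ) ^ (r - k - 1)) ^ 4) * key
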